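/- Let F be a Minkowski norm on ℝⁿ, let Ω ⊆ ℝⁿ be an open set with smooth boundary such that Ω^c is bounded, let 1 < p < n, and let v_p be the positive C¹ weak solution of div(F(∇v)^{p−1} F_ξ(∇v)) = 0 in Ω with v_p = 1 on ∂Ω and v_p → 0 at infinity. If W_r(x₀) ⊆ Ω^c ⊆ W_s(y₀), then for all x ∈ Ω∖{y₀}: (r/F^o(x−x₀))^{(n−p)/(p−1)} ≤ v_p(x) ≤ (s/F^o(x−y₀))^{(n−p)/(p−1)}. -/

import Mathlib

open MeasureTheory Filter Topology Metric Set
open scoped RealInnerProductSpace NNReal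

noncomputable section

abbrev En (n : ℕ) := EuclideanSpace ℝ (Fin n)

/-- A Minkowski norm on ℝⁿ: a norm (convex, even, 1-homogeneous, positive away from 0)
which is smooth away from the origin and whose Hessian of `F²/2` is positive definite
on `ℝⁿ \ {0}`. -/
structure MinkowskiNorm (n : ℕ) where
  F : En n → ℝ
  convexOn : ConvexOn ℝ Set.univ F
  even : ∀ ξ, F (-ξ) = F ξ
  homog : ∀ c : ℝ, 0 ≤ c → ∀ ξ, F (c • ξ) = c * F ξ
  pos : ∀ ξ : En n, ξ ≠ 0 → 0 < F ξ
  smooth : ContDiffOn ℝ (⊤ : ℕ∞) F {(0 : En n)}ᶜ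
  elliptic : ∀ ξ : En n, ξ ≠ 0 → ∀ v : En n, v ≠ 0 →
    0 < fderiv ℝ (fun x => fderiv ℝ (fun y => F y ^ 2 / 2) x) ξ v v

/-- Locally Lipschitz on a set (i.e. `C^{0,1}_loc`). -/
def LocLipOn {n : ℕ} (f : En n → ℝ) (s : Set (En n)) : Prop :=
  ∀ x ∈ s, ∃ (K : ℝ≥0) (t : Set (En n)), t ∈ nhdsWithin x s ∧ LipschitzOnWith K f t

/-- Weak solution of `div(F_ξ(∇u)) = F(∇u)` in `Ω` in the sense of Huisken–Ilmanen's
minimization principle. -/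
def IsWeakSolIAMCF {n : ℕ} (N : MinkowskiNorm n) (Ω : Set (En n)) (u : En n → ℝ) : Prop :=
  LocLipOn u Ω ∧
  ∀ K : Set (En n), IsCompact (closure K) → closure K ⊆ Ω →
    ∀ φ : En n → ℝ, LocLipOn φ Ω → (∀ x ∈ Ω \ K, φ x = u x) →
      (∫ x in K, (N.F (gradient u x) + u x * N.F (gradient u x))) ≤
        ∫ x in K, (N.F (gradient φ x) + φ x * N.F (gradient u x))

/-- Weak subsolution: the minimization inequality holds for competitors `φ ≤ u`. -/
def IsWeakSubSolIAMCF {n : ℕ} (N : MinkowskiNorm n) (Ω : Set (En n)) (u : En n → ℝ) : Prop :=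
  LocLipOn u Ω ∧
  ∀ K : Set (En n), IsCompact (closure K) → closure K ⊆ Ω →
    ∀ φ : En n → ℝ, LocLipOn φ Ω → (∀ x ∈ Ω \ K, φ x = u x) → (∀ x ∈ Ω, φ x ≤ u x) →
      (∫ x in K, (N.F (gradient u x) + u x * N.F (gradient u x))) ≤
        ∫ x in K, (N.F (gradient φ x) + φ x * N.F (gradient u x))

/-- Weak supersolution: the minimization inequality holds for competitors `φ ≥ u`. -/
def IsWeakSuperSolIAMCF {n : ℕ} (N : MinkowskiNorm n) (Ω : Set (En n)) (u : En n → ℝ) : Prop :=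
  LocLipOn u Ω ∧
  ∀ K : Set (En n), IsCompact (closure K) → closure K ⊆ Ω →
    ∀ φ : En n → ℝ, LocLipOn φ Ω → (∀ x ∈ Ω \ K, φ x = u x) → (∀ x ∈ Ω, u x ≤ φ x) →
      (∫ x in K, (N.F (gradient u x) + u x * N.F (gradient u x))) ≤
        ∫ x in K, (N.F (gradient φ x) + φ x * N.F (gradient u x))

/-- A smooth compactly supported test function on `Ω`. -/
def IsTestFun {n : ℕ} (Ω : Set (En n)) (ψ : En n → ℝ) : Prop :=
  ContDiff ℝ (⊤ : ℕ∞) ψ ∧ HasCompactSupport ψ ∧ tsupport ψ ⊆ Ω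

/-- Weak solution of the Finsler `p`-Laplace equation `div(F(∇v)^{p-1} F_ξ(∇v)) = 0` in `Ω`. -/
def IsWeakPHarmonic {n : ℕ} (N : MinkowskiNorm n) (Ω : Set (En n)) (p : ℝ)
    (v : En n → ℝ) : Prop :=
  ∀ ψ : En n → ℝ, IsTestFun Ω ψ →
    (∫ x in Ω, N.F (gradient v x) ^ (p - 1) *
      ⟪gradient N.F (gradient v x), gradient ψ x⟫) = 0

/-- Weak solution of `div(F(∇u)^{p-1} F_ξ(∇u)) = F(∇u)^p` in `Ω`. -/
def IsWeakPSol {n : ℕ} (N : MinkowskiNorm n) (Ω : Set (En n)) (p : ℝ)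
    (u : En n → ℝ) : Prop :=
  ∀ ψ : En n → ℝ, IsTestFun Ω ψ →
    (∫ x in Ω, N.F (gradient u x) ^ (p - 1) *
      ⟪gradient N.F (gradient u x), gradient ψ x⟫) =
      - ∫ x in Ω, N.F (gradient u x) ^ p * ψ x

/-- The polar (dual) norm `F^o(x) = sup_{ξ ≠ 0} ⟨ξ, x⟩ / F(ξ)`. -/
def polarF {n : ℕ} (N : MinkowskiNorm n) (x : En n) : ℝ :=
  sSup {c : ℝ | ∃ ξ : En n, ξ ≠ 0 ∧ c = ⟪ξ, x⟫ / N.F ξ}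

/-- The Wulff shape of radius `r` centered at `x₀`: `{x : F^o(x - x₀) < r}`. -/
def Wulff {n : ℕ} (N : MinkowskiNorm n) (r : ℝ) (x₀ : En n) : Set (En n) :=
  {x | polarF N (x - x₀) < r}

/-- `Ω` is an open set with smooth boundary: it is a smooth sublevel set of a smooth
function with nonvanishing gradient on the boundary. -/
def HasSmoothBoundary {n : ℕ} (Ω : Set (En n)) : Prop :=
  ∃ f : En n → ℝ, ContDiff ℝ (⊤ : ℕ∞) f ∧ Ω = {x | f x < 0} ∧
    ∀ x ∈ frontier Ω, fderiv ℝ f x ≠ 0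

/-- `C¹` on `s` with locally Hölder continuous gradient (i.e. `C^{1,α}_loc`). -/
def C1LocHolderOn {n : ℕ} (v : En n → ℝ) (s : Set (En n)) : Prop :=
  ContDiffOn ℝ 1 v s ∧
  ∀ x ∈ s, ∃ (α C : ℝ≥0), 0 < α ∧ (α : ℝ) ≤ 1 ∧
    ∃ t ∈ nhdsWithin x s, HolderOnWith C α (fun y => gradient v y) t

/-- Divergence of a vector field on `ℝⁿ`. -/
def divg {n : ℕ} (V : En n → En n) (x : En n) : ℝ :=
  ∑ i : Fin n, fderiv ℝ V x (EuclideanSpace.single i 1) i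

/-!
The potential is compared with the radial functions `x ↦ (r / F^o(x - x₀))^{(n-p)/(p-1)}`, which
solve the same equation away from their centers. Indeed `F^o` is differentiable away from the
origin, its gradient at `x` being the point `D(x)` of `{F = 1}` where the supremum defining `F^o(x)`
is attained, and by duality `F_ξ(-D(x)) = -x / F^o(x)`. For the exponent `(n-p)/(p-1)` the flux of
the radial function is therefore a multiple of `x / F^o(x)^n`, which is divergence free because
`F^o` is homogeneous of degree one.

Ellipticity of `F² / 2` makes the flux `F(ξ)^{p-1} F_ξ(ξ)` strictly monotone. Testing the equations
of `a` and `b` with the square of the positive part of `a - b - ε` then gives a comparison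
principle. Its boundary conditions are supplied by the inclusions of the Wulff shapes: the inner
radial function is at most `1` on `∂Ω`, whereas the outer one is at least `1` there and tends to
infinity at its center `y₀`.
-/

section SmoothApproximation

variable {E G : Type*} [NormedAddCommGroup E] [NormedSpace ℝ E] [FiniteDimensional ℝ E]
  [NormedAddCommGroup G] [NormedSpace ℝ G] [CompleteSpace G] {φ : E → G} {δ ε : ℝ}

theorem exists_contDiff_norm_fderiv_sub_le (hφ : ContDiff ℝ 1 φ) (hc : HasCompactSupport φ)
    (hδ : 0 < δ) (hε : 0 < ε) :
    ∃ ψ : E → G, ContDiff ℝ (⊤ : ℕ∞) ψ ∧ tsupport ψ ⊆ cthickening δ (tsupport φ) ∧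
      ∀ x, ‖fderiv ℝ ψ x - fderiv ℝ φ x‖ ≤ ε := by
  borelize E
  let μ : Measure E := Measure.addHaar
  obtain ⟨η, hη, hφη⟩ := Metric.uniformContinuous_iff.mp
    ((hc.fderiv (𝕜 := ℝ)).uniformContinuous_of_continuous (hφ.continuous_fderiv one_ne_zero)) ε hε
  have hρ : 0 < min δ η := lt_min hδ hη
  let b : ContDiffBump (0 : E) := ⟨min δ η / 2, min δ η, half_pos hρ, half_lt_self hρ⟩
  refine ⟨convolution (b.normed μ) φ (ContinuousLinearMap.lsmul ℝ ℝ) μ, ?_, ?_, fun x => ?_⟩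
  · exact b.hasCompactSupport_normed.contDiff_convolution_left _ b.contDiff_normed
      hφ.continuous.locallyIntegrable
  · refine closure_minimal ((support_convolution_subset _).trans ?_) isClosed_cthickening
    rintro _ ⟨y, hy, z, hz, rfl⟩
    rw [b.support_normed_eq, mem_ball_zero_iff] at hy
    refine mem_cthickening_of_dist_le _ z _ _ (subset_tsupport _ hz) ?_
    rw [dist_eq_norm, add_sub_cancel_right]
    exact hy.le.trans (min_le_left _ _)
  · have hderiv : fderiv ℝ (convolution (b.normed μ) φ (ContinuousLinearMap.lsmul ℝ ℝ) μ) x =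
        convolution (b.normed μ) (fderiv ℝ φ) (ContinuousLinearMap.lsmul ℝ ℝ) μ x :=
      (hc.hasFDerivAt_convolution_right (ContinuousLinearMap.lsmul ℝ ℝ)
        b.integrable_normed.locallyIntegrable hφ x).fderiv
    rw [hderiv, ← dist_eq_norm]
    exact b.dist_normed_convolution_le
      (hφ.continuous_fderiv one_ne_zero).aestronglyMeasurable
      fun y hy => (hφη (lt_of_lt_of_le hy (min_le_right _ _))).le

end SmoothApproximation

section Derivatives

theorem fderiv_fderiv_apply_eq_zero_of_eventually_const {E : Type*} [NormedAddCommGroup E]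
    [NormedSpace ℝ E] {G : E → ℝ} {m d : E} {c : ℝ} (hG : ContDiffAt ℝ 2 G m)
    (hc : ∀ᶠ t : ℝ in 𝓝 0, G (m + t • d) = c) : fderiv ℝ (fderiv ℝ G) m d d = 0 := by
  have hline : ∀ t : ℝ, HasDerivAt (fun t : ℝ => m + t • d) d t := fun t => by
    simpa using ((hasDerivAt_id t).smul_const d).const_add m
  have hm : Tendsto (fun t : ℝ => m + t • d) (𝓝 0) (𝓝 m) := by
    simpa using (hline 0).continuousAt.tendsto
  have hfirst : ∀ᶠ t : ℝ in 𝓝 0, fderiv ℝ G (m + t • d) d = 0 := by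
    filter_upwards [hm.eventually (hG.eventually (by norm_num)), hc.eventually_nhds] with t ht htc
    have h : HasDerivAt (fun t : ℝ => G (m + t • d)) (fderiv ℝ G (m + t • d) d) t :=
      (ht.differentiableAt two_ne_zero).hasFDerivAt.comp_hasDerivAt t (hline t)
    exact h.unique ((hasDerivAt_const t c).congr_of_eventuallyEq htc)
  have hdd : HasFDerivAt (fderiv ℝ G) (fderiv ℝ (fderiv ℝ G) m) (m + (0 : ℝ) • d) := by
    simpa using
      ((hG.fderiv_right (m := 1) (by norm_num)).differentiableAt one_ne_zero).hasFDerivAt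
  have hfderiv : HasDerivAt (fun t : ℝ => fderiv ℝ G (m + t • d))
      (fderiv ℝ (fderiv ℝ G) m d) 0 := hdd.comp_hasDerivAt (0 : ℝ) (hline 0)
  have hsecond : HasDerivAt (fun t : ℝ => fderiv ℝ G (m + t • d) d)
      (fderiv ℝ (fderiv ℝ G) m d d) 0 := by
    simpa using hfderiv.clm_apply (hasDerivAt_const (0 : ℝ) d)
  exact hsecond.unique ((hasDerivAt_const (0 : ℝ) (0 : ℝ)).congr_of_eventuallyEq hfirst)

theorem hasDerivAt_max_zero_sq (t : ℝ) :
    HasDerivAt (fun t : ℝ => max t 0 ^ 2) (2 * max t 0) t := by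
  refine hasDerivAt_of_hasDerivAt_of_ne' (f := fun t : ℝ => max t 0 ^ 2)
    (g := fun t => 2 * max t 0) (x := 0) (fun y hy => ?_) (by fun_prop) (by fun_prop) t
  rcases hy.lt_or_gt with hy | hy
  · rw [max_eq_right hy.le, mul_zero]
    refine (hasDerivAt_const y (0 : ℝ)).congr_of_eventuallyEq ?_
    filter_upwards [Iio_mem_nhds hy] with u hu
    rw [max_eq_right (le_of_lt hu), zero_pow two_ne_zero]
  · rw [max_eq_left hy.le]
    refine HasDerivAt.congr_of_eventuallyEq (by simpa using hasDerivAt_pow 2 y) ?_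
    filter_upwards [Ioi_mem_nhds hy] with u hu
    rw [max_eq_left (le_of_lt hu)]

theorem contDiff_max_zero_sq : ContDiff ℝ 1 fun t : ℝ => max t 0 ^ 2 := by
  refine contDiff_one_iff_deriv.mpr
    ⟨fun t => (hasDerivAt_max_zero_sq t).differentiableAt, ?_⟩
  rw [funext fun t => (hasDerivAt_max_zero_sq t).deriv]
  fun_prop

end Derivatives

section Gradient

variable {E : Type*} [NormedAddCommGroup E] [InnerProductSpace ℝ E] [CompleteSpace E]
  {f g : E → ℝ} {D : E → E} {U : Set E} {x : E}

theorem norm_gradient_sub_gradient :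
    ‖gradient f x - gradient g x‖ = ‖fderiv ℝ f x - fderiv ℝ g x‖ := by
  rw [gradient, gradient, ← map_sub, LinearIsometryEquiv.norm_map]

theorem support_gradient_subset_tsupport : Function.support (gradient f) ⊆ tsupport f :=
  fun x hx => support_fderiv_subset ℝ fun h => hx (by rw [gradient, h, map_zero])

theorem tsupport_gradient_subset : tsupport (gradient f) ⊆ tsupport f :=
  closure_minimal support_gradient_subset_tsupport (isClosed_tsupport f)

theorem hasCompactSupport_gradient (hf : HasCompactSupport f) : HasCompactSupport (gradient f) :=
  hf.mono' support_gradient_subset_tsupport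

theorem continuousOn_gradient (hU : IsOpen U) (hf : ContDiffOn ℝ 1 f U) :
    ContinuousOn (gradient f) U :=
  (InnerProductSpace.toDual ℝ E).symm.continuous.comp_continuousOn
    (hf.continuousOn_fderiv_of_isOpen hU le_rfl)

theorem continuous_gradient (hf : ContDiff ℝ 1 f) : Continuous (gradient f) :=
  (InnerProductSpace.toDual ℝ E).symm.continuous.comp (hf.continuous_fderiv one_ne_zero)

theorem contDiffOn_one_of_hasGradientAt (hU : IsOpen U)
    (hf : ∀ x ∈ U, HasGradientAt f (D x) x) (hD : ContinuousOn D U) : ContDiffOn ℝ 1 f U := by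
  rw [← zero_add (1 : WithTop ℕ∞), contDiffOn_succ_iff_fderiv_of_isOpen hU]
  refine ⟨fun x hx => (hf x hx).differentiableAt.differentiableWithinAt, by simp, ?_⟩
  exact contDiffOn_zero.mpr (((InnerProductSpace.toDual ℝ E).continuous.comp_continuousOn hD).congr
    fun x hx => (hf x hx).hasFDerivAt.fderiv)

/- Testing the subgradient inequality at both endpoints traps `f y - f x - ⟪D x, y - x⟫` between
`0` and `⟪D y - D x, y - x⟫`. -/
theorem hasGradientAt_of_subgradient (hD : ∀ x y, ⟪D x, y - x⟫ ≤ f y - f x)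
    (hx : ContinuousAt D x) : HasGradientAt f (D x) x := by
  rw [hasGradientAt_iff_isLittleO, Asymptotics.isLittleO_iff]
  intro ε hε
  filter_upwards [Metric.continuousAt_iff'.mp hx ε hε] with y hy
  have hlower : 0 ≤ f y - f x - ⟪D x, y - x⟫ := sub_nonneg.mpr (hD x y)
  have hupper : f y - f x - ⟪D x, y - x⟫ ≤ ⟪D y - D x, y - x⟫ := by
    have h := hD y x
    rw [← neg_sub y x, inner_neg_right] at h
    rw [inner_sub_left]
    linarith
  rw [Real.norm_of_nonneg hlower]
  calc f y - f x - ⟪D x, y - x⟫ ≤ ‖D y - D x‖ * ‖y - x‖ :=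
        hupper.trans (real_inner_le_norm _ _)
    _ ≤ ε * ‖y - x‖ := by gcongr; rw [← dist_eq_norm]; exact hy.le

theorem eq_zero_of_gradient_eq_zero [NoncompactSpace E] (hf : Differentiable ℝ f)
    (hc : HasCompactSupport f) (h : ∀ x, gradient f x = 0) (x : E) : f x = 0 := by
  obtain ⟨y, hy⟩ := (ne_univ_iff_exists_notMem _).mp hc.isCompact.ne_univ
  rw [← image_eq_zero_of_notMem_tsupport hy]
  refine is_const_of_fderiv_eq_zero hf (fun z => ?_) x y
  rw [← toDual_gradient, h z, map_zero]

end Gradient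

section WeakDivergence

section Pairing

variable {X F : Type*} [NormedAddCommGroup F] [InnerProductSpace ℝ F] {U : Set X} {V W : X → F}

theorem support_inner_subset_right : Function.support (fun x => ⟪V x, W x⟫) ⊆ Function.support W :=
  fun x hx h => hx (by simp only [h, inner_zero_right])

variable [TopologicalSpace X]

theorem continuous_inner_of_tsupport_subset (hU : IsOpen U) (hV : ContinuousOn V U)
    (hW : Continuous W) (hWU : tsupport W ⊆ U) : Continuous fun x => ⟪V x, W x⟫ :=
  (hV.inner hW.continuousOn).continuous_of_tsupport_subset hU
    ((closure_mono support_inner_subset_right).trans hWU)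

theorem hasCompactSupport_inner_right (hc : HasCompactSupport W) :
    HasCompactSupport fun x => ⟪V x, W x⟫ :=
  hc.mono support_inner_subset_right

theorem integrable_inner_of_tsupport_subset [MeasurableSpace X] [OpensMeasurableSpace X]
    {μ : Measure X} [IsFiniteMeasureOnCompacts μ] (hU : IsOpen U) (hV : ContinuousOn V U)
    (hW : Continuous W) (hc : HasCompactSupport W) (hWU : tsupport W ⊆ U) :
    Integrable (fun x => ⟪V x, W x⟫) μ :=
  (continuous_inner_of_tsupport_subset hU hV hW hWU).integrable_of_hasCompactSupport
    (hasCompactSupport_inner_right hc)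

end Pairing

variable {E : Type*} [NormedAddCommGroup E] [InnerProductSpace ℝ E] [CompleteSpace E]
  [MeasurableSpace E] {μ : Measure E} {V W : E → E} {U : Set E} {φ ψ : E → ℝ}

/-- The vector field `V` has vanishing weak divergence in `U` with respect to `μ`. The test
functions are the compactly supported functions of class `C¹`, so that truncations of `C¹`
functions are admissible. -/
def IsWeaklyDivFree (μ : Measure E) (V : E → E) (U : Set E) : Prop :=
  ∀ φ : E → ℝ, ContDiff ℝ 1 φ → HasCompactSupport φ → tsupport φ ⊆ U →
    ∫ x, ⟪V x, gradient φ x⟫ ∂μ = 0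

theorem IsWeaklyDivFree.const_smul (hV : IsWeaklyDivFree μ V U) (c : ℝ) :
    IsWeaklyDivFree μ (fun x => c • V x) U := fun φ hφ hc hφU => by
  simp only [real_inner_smul_left, integral_const_mul, hV φ hφ hc hφU, mul_zero]

theorem IsWeaklyDivFree.mono {U' : Set E} (hV : IsWeaklyDivFree μ V U) (h : U' ⊆ U) :
    IsWeaklyDivFree μ V U' := fun φ hφ hc hφU => hV φ hφ hc (hφU.trans h)

theorem IsWeaklyDivFree.congr (hV : IsWeaklyDivFree μ V U) (h : EqOn W V U) :
    IsWeaklyDivFree μ W U := fun φ hφ hc hφU => by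
  rw [← hV φ hφ hc hφU]
  congr 1 with x
  by_cases hx : gradient φ x = 0
  · simp only [hx, inner_zero_right]
  · rw [h (hφU (support_gradient_subset_tsupport hx))]

theorem norm_integral_inner_gradient_sub_le {K : Set E} {M ε : ℝ} (hK : μ K < ⊤) (hM : 0 ≤ M)
    (hV : ∀ x ∈ K, ‖V x‖ ≤ M) (hφK : tsupport φ ⊆ K) (hψK : tsupport ψ ⊆ K)
    (h : ∀ x, ‖gradient φ x - gradient ψ x‖ ≤ ε) :
    ‖∫ x, ⟪V x, gradient φ x - gradient ψ x⟫ ∂μ‖ ≤ M * ε * μ.real K := by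
  rw [← setIntegral_eq_integral_of_forall_compl_eq_zero (s := K) fun x hx => ?_]
  · refine norm_setIntegral_le_of_norm_le_const hK fun x hx => ?_
    exact (norm_inner_le_norm _ _).trans
      (mul_le_mul (hV x hx) (h x) (norm_nonneg _) hM)
  · rw [Function.notMem_support.mp fun h => hx (hφK (support_gradient_subset_tsupport h)),
      Function.notMem_support.mp fun h => hx (hψK (support_gradient_subset_tsupport h)), sub_zero,
      inner_zero_right]

variable [BorelSpace E]

theorem integrable_inner_gradient [IsFiniteMeasureOnCompacts μ] (hU : IsOpen U)
    (hV : ContinuousOn V U) (hφ : ContDiff ℝ 1 φ) (hc : HasCompactSupport φ)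
    (hφU : tsupport φ ⊆ U) : Integrable (fun x => ⟪V x, gradient φ x⟫) μ :=
  integrable_inner_of_tsupport_subset hU hV (continuous_gradient hφ)
    (hasCompactSupport_gradient hc) (tsupport_gradient_subset.trans hφU)

theorem isWeaklyDivFree_of_smooth [FiniteDimensional ℝ E] [IsFiniteMeasureOnCompacts μ]
    (hU : IsOpen U) (hV : ContinuousOn V U)
    (h : ∀ ψ : E → ℝ, ContDiff ℝ (⊤ : ℕ∞) ψ → HasCompactSupport ψ → tsupport ψ ⊆ U →
      ∫ x, ⟪V x, gradient ψ x⟫ ∂μ = 0) : IsWeaklyDivFree μ V U := by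
  intro φ hφ hc hφU
  obtain ⟨δ, hδ, hδU⟩ := hc.isCompact.exists_cthickening_subset_open hU hφU
  have hK : IsCompact (cthickening δ (tsupport φ)) := hc.isCompact.cthickening
  obtain ⟨M, hM⟩ := hK.exists_bound_of_continuousOn (hV.mono hδU)
  have hbound : ∀ ε > 0, ‖∫ x, ⟪V x, gradient φ x⟫ ∂μ‖ ≤
      |M| * ε * μ.real (cthickening δ (tsupport φ)) := by
    intro ε hε
    obtain ⟨ψ, hψ, hψK, hψε⟩ := exists_contDiff_norm_fderiv_sub_le hφ hc hδ hε
    have hψc : HasCompactSupport ψ := hK.of_isClosed_subset (isClosed_tsupport ψ) hψK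
    have hsub : ∫ x, ⟪V x, gradient φ x - gradient ψ x⟫ ∂μ = ∫ x, ⟪V x, gradient φ x⟫ ∂μ := by
      simp only [inner_sub_right]
      rw [integral_sub (integrable_inner_gradient hU hV hφ hc hφU)
        (integrable_inner_gradient hU hV (hψ.of_le (by exact_mod_cast le_top)) hψc
          (hψK.trans hδU)), h ψ hψ hψc (hψK.trans hδU), sub_zero]
    rw [← hsub]
    exact norm_integral_inner_gradient_sub_le hK.measure_lt_top (abs_nonneg M)
      (fun x hx => (hM x hx).trans (le_abs_self M)) (self_subset_cthickening _) hψK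
      fun x => by rw [norm_gradient_sub_gradient, norm_sub_rev]; exact hψε x
  have hlim : Tendsto (fun ε : ℝ => |M| * ε * μ.real (cthickening δ (tsupport φ))) (𝓝[>] 0)
      (𝓝 0) := by
    refine tendsto_nhdsWithin_of_tendsto_nhds (Continuous.tendsto' (by fun_prop) _ _ ?_)
    rw [mul_zero, zero_mul]
  exact norm_le_zero_iff.mp (ge_of_tendsto hlim (eventually_mem_nhdsWithin.mono hbound))

end WeakDivergence

section IntegrationByParts

theorem integrable_mul_of_tsupport_subset {X : Type*} [TopologicalSpace X] [MeasurableSpace X]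
    [OpensMeasurableSpace X] {μ : Measure X} [IsFiniteMeasureOnCompacts μ] {U : Set X}
    {f g : X → ℝ} (hU : IsOpen U) (hf : ContinuousOn f U) (hg : Continuous g)
    (hc : HasCompactSupport g) (hgU : tsupport g ⊆ U) : Integrable (fun x => f x * g x) μ := by
  simpa only [RCLike.inner_apply, conj_trivial, mul_comm] using
    integrable_inner_of_tsupport_subset (μ := μ) hU hf hg hc hgU

variable {E : Type*} [NormedAddCommGroup E] [NormedSpace ℝ E] [MeasurableSpace E] [BorelSpace E]
  {μ : Measure E} {U : Set E} {f φ : E → ℝ}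

theorem integrable_fderiv_apply_mul [IsFiniteMeasureOnCompacts μ] (hU : IsOpen U)
    (hf : ContDiffOn ℝ 1 f U) (hφ : ContDiff ℝ 1 φ) (hc : HasCompactSupport φ)
    (hφU : tsupport φ ⊆ U) (w : E) : Integrable (fun x => fderiv ℝ f x w * φ x) μ :=
  integrable_mul_of_tsupport_subset hU
    ((hf.continuousOn_fderiv_of_isOpen hU le_rfl).clm_apply continuousOn_const) hφ.continuous hc hφU

theorem integrable_mul_fderiv_apply [IsFiniteMeasureOnCompacts μ] (hU : IsOpen U)
    (hf : ContDiffOn ℝ 1 f U) (hφ : ContDiff ℝ 1 φ) (hc : HasCompactSupport φ)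
    (hφU : tsupport φ ⊆ U) (w : E) : Integrable (fun x => f x * fderiv ℝ φ x w) μ :=
  integrable_mul_of_tsupport_subset hU hf.continuousOn
    ((hφ.continuous_fderiv one_ne_zero).clm_apply continuous_const) (hc.fderiv_apply (𝕜 := ℝ) w)
    ((tsupport_fderiv_apply_subset ℝ w).trans hφU)

theorem integral_mul_fderiv_eq_neg_fderiv_mul_of_tsupport_subset [FiniteDimensional ℝ E]
    [μ.IsAddHaarMeasure] (hU : IsOpen U) (hf : ContDiffOn ℝ 1 f U) (hφ : ContDiff ℝ 1 φ)
    (hc : HasCompactSupport φ) (hφU : tsupport φ ⊆ U) (w : E) :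
    ∫ x, f x * fderiv ℝ φ x w ∂μ = -∫ x, fderiv ℝ f x w * φ x ∂μ :=
  integral_mul_fderiv_eq_neg_fderiv_mul_of_integrable
    (integrable_fderiv_apply_mul hU hf hφ hc hφU w) (integrable_mul_fderiv_apply hU hf hφ hc hφU w)
    (integrable_mul_of_tsupport_subset hU hf.continuousOn hφ.continuous hc hφU)
    (fun _ hx => (hf.contDiffAt (hU.mem_nhds (hφU hx))).differentiableAt one_ne_zero)
    fun x _ => hφ.differentiable one_ne_zero x

end IntegrationByParts

section Divergence

variable {n : ℕ}

theorem fderiv_coord_apply {V : En n → En n} {x : En n} (hV : DifferentiableAt ℝ V x) (i : Fin n)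
    (w : En n) : fderiv ℝ (fun z => V z i) x w = fderiv ℝ V x w i := by
  have h : HasFDerivAt (fun z => V z i) ((EuclideanSpace.proj i).comp (fderiv ℝ V x)) x :=
    (EuclideanSpace.proj (𝕜 := ℝ) i).hasFDerivAt.comp x hV.hasFDerivAt
  rw [h.fderiv]
  rfl

theorem inner_gradient_eq_sum_mul_fderiv_single (φ : En n → ℝ) (w x : En n) :
    ⟪w, gradient φ x⟫ = ∑ i, w i * fderiv ℝ φ x (EuclideanSpace.single i 1) := by
  rw [← (EuclideanSpace.basisFun (Fin n) ℝ).sum_inner_mul_inner]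
  refine Finset.sum_congr rfl fun i _ => ?_
  rw [EuclideanSpace.basisFun_apply, inner_gradient_right, real_inner_comm,
    conj_trivial, EuclideanSpace.inner_single_left, map_one, one_mul]

theorem isWeaklyDivFree_of_divg_eq_zero {V : En n → En n} {U : Set (En n)} (hU : IsOpen U)
    (hV : ContDiffOn ℝ 1 V U) (hdiv : ∀ x ∈ U, divg V x = 0) :
    IsWeaklyDivFree volume V U := by
  intro φ hφ hc hφU
  have hVi : ∀ i, ContDiffOn ℝ 1 (fun x => V x i) U := fun i =>
    (EuclideanSpace.proj (𝕜 := ℝ) i).contDiff.comp_contDiffOn hV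
  have hdivφ : ∀ x, ∑ i, fderiv ℝ (fun z => V z i) x (EuclideanSpace.single i 1) * φ x = 0 := by
    intro x
    rw [← Finset.sum_mul]
    by_cases hx : x ∈ tsupport φ
    · have hVx := (hV.contDiffAt (hU.mem_nhds (hφU hx))).differentiableAt one_ne_zero
      simp only [fderiv_coord_apply hVx]
      rw [← divg, hdiv x (hφU hx), zero_mul]
    · rw [image_eq_zero_of_notMem_tsupport hx, mul_zero]
  calc ∫ x, ⟪V x, gradient φ x⟫
      = ∑ i, ∫ x, V x i * fderiv ℝ φ x (EuclideanSpace.single i 1) := by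
        simp only [inner_gradient_eq_sum_mul_fderiv_single]
        exact integral_finsetSum _ fun i _ => integrable_mul_fderiv_apply hU (hVi i) hφ hc hφU _
    _ = -∑ i, ∫ x, fderiv ℝ (fun z => V z i) x (EuclideanSpace.single i 1) * φ x := by
        rw [← Finset.sum_neg_distrib]
        exact Finset.sum_congr rfl fun i _ =>
          integral_mul_fderiv_eq_neg_fderiv_mul_of_tsupport_subset hU (hVi i) hφ hc hφU _
    _ = -∫ x, ∑ i, fderiv ℝ (fun z => V z i) x (EuclideanSpace.single i 1) * φ x := by
        rw [integral_finsetSum _ fun i _ => integrable_fderiv_apply_mul hU (hVi i) hφ hc hφU _]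
    _ = 0 := by simp only [hdivφ, integral_zero, neg_zero]

theorem divg_smul_sub {g : En n → ℝ} {x : En n} (hg : DifferentiableAt ℝ g x) (y : En n) :
    divg (fun z => g z • (z - y)) x = n * g x + fderiv ℝ g x (x - y) := by
  have hV : HasFDerivAt (fun z => g z • (z - y))
      (g x • ContinuousLinearMap.id ℝ (En n) + (fderiv ℝ g x).smulRight (x - y)) x :=
    hg.hasFDerivAt.smul ((hasFDerivAt_id x).sub_const y)
  have hg' : fderiv ℝ g x (x - y) =
      ∑ i, fderiv ℝ g x (EuclideanSpace.single i 1) * (x - y) i := by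
    rw [← inner_gradient_left, real_inner_comm, inner_gradient_eq_sum_mul_fderiv_single]
    exact Finset.sum_congr rfl fun i _ => mul_comm _ _
  have hn : (n : ℝ) * g x = ∑ _i : Fin n, g x := by simp
  rw [divg, hV.fderiv, hg', hn, ← Finset.sum_add_distrib]
  refine Finset.sum_congr rfl fun i _ => ?_
  simp

end Divergence

section Comparison

/-- The square of the positive part of `f` on `U`, extended by zero: a test function
which detects where `f` is positive. The square makes it `C¹` across the zero set of a `C¹`
function `f`. -/
def posPartSq {X : Type*} (U : Set X) (f : X → ℝ) : X → ℝ :=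
  U.indicator fun x => max (f x) 0 ^ 2

theorem support_posPartSq_subset {X : Type*} (U : Set X) (f : X → ℝ) :
    Function.support (posPartSq U f) ⊆ {x ∈ U | 0 ≤ f x} := by
  intro x hx
  have hxU : x ∈ U := mem_of_indicator_ne_zero hx
  refine ⟨hxU, le_of_not_gt fun hneg => hx ?_⟩
  rw [posPartSq, indicator_of_mem hxU, max_eq_right hneg.le, zero_pow two_ne_zero]

theorem tsupport_posPartSq_subset {X : Type*} [TopologicalSpace X] {U : Set X} {f : X → ℝ}
    (h : IsClosed {x ∈ U | 0 ≤ f x}) : tsupport (posPartSq U f) ⊆ {x ∈ U | 0 ≤ f x} :=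
  closure_minimal (support_posPartSq_subset U f) h

theorem posPartSq_eventuallyEq {X : Type*} [TopologicalSpace X] {U : Set X} {x : X}
    (hU : IsOpen U) (hx : x ∈ U) (f : X → ℝ) :
    posPartSq U f =ᶠ[𝓝 x] fun z => max (f z) 0 ^ 2 := by
  filter_upwards [hU.mem_nhds hx] with z hz using indicator_of_mem hz _

theorem contDiff_posPartSq {E : Type*} [NormedAddCommGroup E] [NormedSpace ℝ E] {U : Set E}
    {f : E → ℝ} (hU : IsOpen U) (hf : ContDiffOn ℝ 1 f U) (h : IsClosed {x ∈ U | 0 ≤ f x}) :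
    ContDiff ℝ 1 (posPartSq U f) := by
  refine contDiff_iff_contDiffAt.mpr fun x => ?_
  by_cases hx : x ∈ tsupport (posPartSq U f)
  · have hxU : x ∈ U := (tsupport_posPartSq_subset h hx).1
    exact (contDiff_max_zero_sq.contDiffAt.comp x (hf.contDiffAt (hU.mem_nhds hxU)))
      |>.congr_of_eventuallyEq (posPartSq_eventuallyEq hU hxU f)
  · exact contDiffAt_const.congr_of_eventuallyEq (notMem_tsupport_iff_eventuallyEq.mp hx)

theorem isCompact_setOf_le_of_eventually_lt {X : Type*} [TopologicalSpace X] {U : Set X}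
    {f : X → ℝ} {c : ℝ} (hU : IsOpen U) (hf : ContinuousOn f U)
    (hfr : ∀ z ∈ frontier U, ∀ᶠ x in 𝓝[U] z, f x < c)
    (hinf : ∀ᶠ x in cocompact X ⊓ 𝓟 U, f x < c) : IsCompact {x ∈ U | c ≤ f x} := by
  obtain ⟨K, hK, hKf⟩ := Filter.mem_cocompact.mp (mem_inf_principal.mp hinf)
  have hsub : {x ∈ U | c ≤ f x} ⊆ K := fun x hx =>
    by_contra fun hxK => (hKf hxK hx.1).not_ge hx.2
  refine hK.of_isClosed_subset (isClosed_of_closure_subset fun z hz => ?_) hsub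
  have hfreq : ∃ᶠ x in 𝓝[U] z, c ≤ f x := by
    rw [frequently_nhdsWithin_iff]
    exact (mem_closure_iff_frequently.mp hz).mono fun x hx => ⟨hx.2, hx.1⟩
  have hzU : z ∈ U := by_contra fun hzU => hfreq
    ((hfr z (hU.frontier_eq ▸ ⟨closure_mono (sep_subset U _) hz, hzU⟩)).mono fun x hx => hx.not_ge)
  exact ⟨hzU, ge_of_tendsto_of_frequently (hf z hzU) hfreq⟩

variable {E : Type*} [NormedAddCommGroup E] [InnerProductSpace ℝ E]

/-- Strict monotonicity of a vector field on a Hilbert space, the structural condition on the flux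
of a quasilinear equation which yields the comparison principle. -/
def IsStrictlyMonotone (A : E → E) : Prop :=
  ∀ ξ ζ : E, ξ ≠ ζ → 0 < ⟪A ξ - A ζ, ξ - ζ⟫

variable {A : E → E}

theorem IsStrictlyMonotone.inner_nonneg (hA : IsStrictlyMonotone A) (ξ ζ : E) :
    0 ≤ ⟪A ξ - A ζ, ξ - ζ⟫ := by
  rcases eq_or_ne ξ ζ with rfl | h
  · simp
  · exact (hA ξ ζ h).le

variable [CompleteSpace E] {U : Set E} {a b f : E → ℝ} {x : E}

theorem gradient_posPartSq {D : E} (hU : IsOpen U) (hx : x ∈ U) (hf : HasGradientAt f D x) :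
    gradient (posPartSq U f) x = (2 * max (f x) 0) • D := by
  have h : HasFDerivAt (fun z => max (f z) 0 ^ 2)
      ((2 * max (f x) 0) • InnerProductSpace.toDual ℝ E D) x :=
    HasDerivAt.comp_hasFDerivAt (h₂ := fun t : ℝ => max t 0 ^ 2) x (hasDerivAt_max_zero_sq (f x))
      hf.hasFDerivAt
  rw [(posPartSq_eventuallyEq hU hx f).gradient_eq]
  refine HasGradientAt.gradient (hasGradientAt_iff_hasFDerivAt.mpr ?_)
  rwa [map_smul]

theorem hasGradientAt_sub_sub_const (ha : DifferentiableAt ℝ a x) (hb : DifferentiableAt ℝ b x)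
    (c : ℝ) : HasGradientAt (fun z => a z - b z - c) (gradient a x - gradient b x) x := by
  rw [hasGradientAt_iff_hasFDerivAt, map_sub, toDual_gradient, toDual_gradient]
  exact (ha.hasFDerivAt.sub hb.hasFDerivAt).sub_const c

variable [MeasurableSpace E] [BorelSpace E] {μ : Measure E} [μ.IsOpenPosMeasure]
  [IsFiniteMeasureOnCompacts μ]

theorem inner_sub_eq_zero_of_isWeaklyDivFree {V W : E → E} {φ : E → ℝ} (hU : IsOpen U)
    (hV : ContinuousOn V U) (hW : ContinuousOn W U) (hVd : IsWeaklyDivFree μ V U)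
    (hWd : IsWeaklyDivFree μ W U) (hφ : ContDiff ℝ 1 φ) (hc : HasCompactSupport φ)
    (hφU : tsupport φ ⊆ U) (hnonneg : ∀ x, 0 ≤ ⟪V x - W x, gradient φ x⟫) (x : E) :
    ⟪V x - W x, gradient φ x⟫ = 0 := by
  by_contra hne
  have hpos : 0 < ∫ x, ⟪V x - W x, gradient φ x⟫ ∂μ :=
    Continuous.integral_pos_of_hasCompactSupport_nonneg_nonzero
      (continuous_inner_of_tsupport_subset hU (hV.sub hW) (continuous_gradient hφ)
        (tsupport_gradient_subset.trans hφU))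
      (hasCompactSupport_inner_right (hasCompactSupport_gradient hc)) hnonneg hne
  simp only [inner_sub_left] at hpos
  rw [integral_sub (integrable_inner_gradient hU hV hφ hc hφU)
    (integrable_inner_gradient hU hW hφ hc hφU), hVd φ hφ hc hφU, hWd φ hφ hc hφU,
    sub_zero] at hpos
  exact hpos.false

/- Test both equations with `posPartSq U (a - b - c)`: strict monotonicity forces its gradient to
vanish. -/
theorem gradient_posPartSq_eq_zero (hA : Continuous A) (hmono : IsStrictlyMonotone A)
    (hU : IsOpen U) (ha : ContDiffOn ℝ 1 a U) (hb : ContDiffOn ℝ 1 b U)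
    (haA : IsWeaklyDivFree μ (fun x => A (gradient a x)) U)
    (hbA : IsWeaklyDivFree μ (fun x => A (gradient b x)) U) {c : ℝ}
    (hK : IsCompact {x ∈ U | 0 ≤ a x - b x - c}) (x : E) :
    gradient (posPartSq U fun z => a z - b z - c) x = 0 := by
  set φ := posPartSq U fun z => a z - b z - c
  have hφK : tsupport φ ⊆ {x ∈ U | 0 ≤ a x - b x - c} := tsupport_posPartSq_subset hK.isClosed
  have hφU : tsupport φ ⊆ U := hφK.trans (sep_subset _ _)
  have hgrad : ∀ x ∈ U,
      gradient φ x = (2 * max (a x - b x - c) 0) • (gradient a x - gradient b x) := fun x hx =>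
    gradient_posPartSq hU hx (hasGradientAt_sub_sub_const
      ((ha.contDiffAt (hU.mem_nhds hx)).differentiableAt one_ne_zero)
      ((hb.contDiffAt (hU.mem_nhds hx)).differentiableAt one_ne_zero) c)
  have hgrad_off : ∀ x ∉ U, gradient φ x = 0 := fun x hx =>
    Function.notMem_support.mp fun h => hx (hφU (support_gradient_subset_tsupport h))
  have hnonneg : ∀ x, 0 ≤ ⟪A (gradient a x) - A (gradient b x), gradient φ x⟫ := by
    intro x
    by_cases hx : x ∈ U
    · rw [hgrad x hx, real_inner_smul_right]
      exact mul_nonneg (by positivity) (hmono.inner_nonneg _ _)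
    · rw [hgrad_off x hx, inner_zero_right]
  have hzero : ⟪A (gradient a x) - A (gradient b x), gradient φ x⟫ = 0 :=
    inner_sub_eq_zero_of_isWeaklyDivFree hU (hA.comp_continuousOn (continuousOn_gradient hU ha))
      (hA.comp_continuousOn (continuousOn_gradient hU hb)) haA hbA
      (contDiff_posPartSq hU ((ha.sub hb).sub contDiffOn_const) hK.isClosed)
      (hK.of_isClosed_subset (isClosed_tsupport φ) hφK) hφU hnonneg x
  by_cases hx : x ∈ U
  · rw [hgrad x hx, smul_eq_zero, sub_eq_zero]
    rw [hgrad x hx, real_inner_smul_right, mul_eq_zero] at hzero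
    exact hzero.imp_right fun h => by_contra fun hne => (hmono _ _ hne).ne' h
  · exact hgrad_off x hx

theorem le_of_isWeaklyDivFree [NoncompactSpace E] (hA : Continuous A)
    (hmono : IsStrictlyMonotone A) (hU : IsOpen U) (ha : ContDiffOn ℝ 1 a U)
    (hb : ContDiffOn ℝ 1 b U) (haA : IsWeaklyDivFree μ (fun x => A (gradient a x)) U)
    (hbA : IsWeaklyDivFree μ (fun x => A (gradient b x)) U)
    (hfr : ∀ ε > 0, ∀ z ∈ frontier U, ∀ᶠ x in 𝓝[U] z, a x - b x < ε)
    (hinf : ∀ ε > 0, ∀ᶠ x in cocompact E ⊓ 𝓟 U, a x - b x < ε) : ∀ x ∈ U, a x ≤ b x := by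
  refine fun x hx => sub_nonpos.mp (le_of_forall_pos_le_add fun ε hε => ?_)
  have hf : ContDiffOn ℝ 1 (fun x => a x - b x - ε) U := (ha.sub hb).sub contDiffOn_const
  have hK : IsCompact {x ∈ U | 0 ≤ a x - b x - ε} :=
    isCompact_setOf_le_of_eventually_lt hU hf.continuousOn
      (fun z hz => (hfr ε hε z hz).mono fun _ => sub_neg.mpr)
      ((hinf ε hε).mono fun _ => sub_neg.mpr)
  have hzero : posPartSq U (fun x => a x - b x - ε) x = 0 :=
    eq_zero_of_gradient_eq_zero
      ((contDiff_posPartSq hU hf hK.isClosed).differentiable one_ne_zero)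
      (hK.of_isClosed_subset (isClosed_tsupport _) (tsupport_posPartSq_subset hK.isClosed))
      (gradient_posPartSq_eq_zero hA hmono hU ha hb haA hbA hK) x
  rw [posPartSq, indicator_of_mem hx, sq_eq_zero_iff, max_eq_right_iff] at hzero
  linarith

end Comparison

namespace MinkowskiNorm

section Norm

variable {n : ℕ} (N : MinkowskiNorm n) {ξ ζ η : En n}

theorem F_zero : N.F 0 = 0 := by
  simpa using N.homog 0 le_rfl 0

theorem F_nonneg (ξ : En n) : 0 ≤ N.F ξ := by
  rcases eq_or_ne ξ 0 with rfl | h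
  · exact N.F_zero.ge
  · exact (N.pos ξ h).le

theorem F_eq_zero_iff : N.F ξ = 0 ↔ ξ = 0 :=
  ⟨fun h => by_contra fun hne => (N.pos ξ hne).ne' h, fun h => h ▸ N.F_zero⟩

theorem F_inv_smul_self (hξ : ξ ≠ 0) : N.F ((N.F ξ)⁻¹ • ξ) = 1 := by
  rw [N.homog _ (inv_nonneg.mpr (N.F_nonneg ξ)), inv_mul_cancel₀ (N.pos ξ hξ).ne']

theorem F_add_le (ξ ζ : En n) : N.F (ξ + ζ) ≤ N.F ξ + N.F ζ := by
  have h := N.convexOn.2 (mem_univ ξ) (mem_univ ζ) (show (0 : ℝ) ≤ 1 / 2 by norm_num)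
    (show (0 : ℝ) ≤ 1 / 2 by norm_num) (by norm_num)
  rw [← smul_add, N.homog _ (by norm_num)] at h
  simp only [smul_eq_mul] at h
  linarith

theorem continuous_F : Continuous N.F := by
  simpa [continuousOn_univ] using N.convexOn.continuousOn_interior

theorem exists_mul_norm_le_F : ∃ c > 0, ∀ ξ, c * ‖ξ‖ ≤ N.F ξ := by
  obtain ⟨c, hc, hmin⟩ := (isCompact_sphere (0 : En n) 1).exists_forall_le' (a := 0)
    N.continuous_F.continuousOn fun ξ hξ => N.pos ξ (ne_zero_of_mem_unit_sphere ⟨ξ, hξ⟩)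
  refine ⟨c, hc, fun ξ => ?_⟩
  rcases eq_or_ne ξ 0 with rfl | hξ
  · simp [N.F_zero]
  · have h := hmin (‖ξ‖⁻¹ • ξ) (by simp [norm_smul, hξ])
    rwa [N.homog _ (by positivity), inv_mul_eq_div, le_div_iff₀ (norm_pos_iff.mpr hξ)] at h

theorem exists_F_le_mul_norm : ∃ C > 0, ∀ ξ, N.F ξ ≤ C * ‖ξ‖ := by
  let q : Seminorm ℝ (En n) := Seminorm.of N.F N.F_add_le fun c ξ => by
    rcases le_total 0 c with hc | hc
    · rw [N.homog c hc, Real.norm_of_nonneg hc]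
    · rw [← N.even, ← neg_smul, N.homog _ (neg_nonneg.mpr hc), Real.norm_of_nonpos hc]
  exact q.bound_of_continuous_normedSpace N.continuous_F

theorem isCompact_unitSphere : IsCompact {ξ | N.F ξ = 1} := by
  obtain ⟨c, hc, hlower⟩ := N.exists_mul_norm_le_F
  refine Metric.isCompact_of_isClosed_isBounded (isClosed_eq N.continuous_F continuous_const)
    (isBounded_closedBall (x := (0 : En n)) (r := c⁻¹) |>.subset fun ξ (hξ : N.F ξ = 1) => ?_)
  rw [mem_closedBall_zero_iff, ← one_div, le_div_iff₀' hc]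
  exact (hlower ξ).trans_eq hξ

theorem differentiableAt_F (hξ : ξ ≠ 0) : DifferentiableAt ℝ N.F ξ :=
  (N.smooth.contDiffAt (isOpen_compl_singleton.mem_nhds hξ)).differentiableAt (by simp)

theorem hasDerivAt_F_line (hξ : ξ ≠ 0) (ζ : En n) :
    HasDerivAt (fun t : ℝ => N.F (ξ + t • ζ)) ⟪gradient N.F ξ, ζ⟫ 0 := by
  rw [inner_gradient_left]
  exact (N.differentiableAt_F hξ).hasFDerivAt.hasLineDerivAt ζ

theorem inner_gradient_F_self (ξ : En n) : ⟪gradient N.F ξ, ξ⟫ = N.F ξ := by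
  rcases eq_or_ne ξ 0 with rfl | hξ
  · rw [inner_zero_right, N.F_zero]
  · have hlin : HasDerivAt (fun t : ℝ => (1 + t) * N.F ξ) (N.F ξ) 0 := by
      simpa using ((hasDerivAt_id (0 : ℝ)).const_add 1).mul_const (N.F ξ)
    refine (N.hasDerivAt_F_line hξ ξ).unique (hlin.congr_of_eventuallyEq ?_)
    filter_upwards [Ioi_mem_nhds (show (-1 : ℝ) < 0 by norm_num)] with t ht
    rw [← N.homog _ (neg_le_iff_add_nonneg'.mp (le_of_lt ht)), add_smul, one_smul]

theorem inner_gradient_F_le (hξ : ξ ≠ 0) (ζ : En n) : ⟪gradient N.F ξ, ζ⟫ ≤ N.F ζ := by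
  refine le_of_tendsto (N.hasDerivAt_F_line hξ ζ).tendsto_slope_zero_right ?_
  filter_upwards [self_mem_nhdsWithin] with t ht
  have hadd := N.F_add_le ξ (t • ζ)
  rw [N.homog t (le_of_lt ht)] at hadd
  rw [zero_add, zero_smul, add_zero, smul_eq_mul, inv_mul_le_iff₀ ht]
  linarith

theorem gradient_F_eq_of_inner_le (hη : ∀ x, ⟪η, x⟫ ≤ N.F x) (hξ : ξ ≠ 0)
    (h : ⟪η, ξ⟫ = N.F ξ) : gradient N.F ξ = η := by
  have hdiff : HasFDerivAt (fun x => N.F x - innerSL ℝ η x)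
      (fderiv ℝ N.F ξ - innerSL ℝ η) ξ :=
    (N.differentiableAt_F hξ).hasFDerivAt.sub (innerSL ℝ η).hasFDerivAt
  have hmin : IsLocalMin (fun x => N.F x - innerSL ℝ η x) ξ :=
    Eventually.of_forall fun x => by simpa [h] using hη x
  have hzero := sub_eq_zero.mp (hmin.hasFDerivAt_eq_zero hdiff)
  refine ext_inner_right ℝ fun x => ?_
  rw [inner_gradient_left, hzero, innerSL_apply_apply]

theorem F_eq_of_mem_segment (hη : ∀ x, ⟪η, x⟫ ≤ N.F x) (hξ : ⟪η, ξ⟫ = N.F ξ)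
    (hζ : ⟪η, ζ⟫ = N.F ζ) (h : N.F ξ = N.F ζ) {x : En n} (hx : x ∈ segment ℝ ξ ζ) :
    N.F x = N.F ξ := by
  obtain ⟨a, b, ha, hb, hab, rfl⟩ := hx
  apply le_antisymm
  · calc N.F (a • ξ + b • ζ) ≤ a • N.F ξ + b • N.F ζ :=
          N.convexOn.2 (mem_univ ξ) (mem_univ ζ) ha hb hab
      _ = N.F ξ := by rw [← h, ← add_smul, hab, one_smul]
  · calc N.F ξ = ⟪η, a • ξ + b • ζ⟫ := by
          rw [inner_add_right, real_inner_smul_right, real_inner_smul_right, hξ, hζ, ← h,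
            ← add_mul, hab, one_mul]
      _ ≤ N.F (a • ξ + b • ζ) := hη _

/- `F` is constant on the segment joining two points of contact, so the second derivative of
`F² / 2` along it vanishes at the midpoint, against ellipticity. -/
theorem eq_of_inner_eq_F (hη : ∀ x, ⟪η, x⟫ ≤ N.F x) (hξ : ⟪η, ξ⟫ = N.F ξ)
    (hζ : ⟪η, ζ⟫ = N.F ζ) (h : N.F ξ = N.F ζ) : ξ = ζ := by
  by_contra hne
  set d := ζ - ξ
  set m := midpoint ℝ ξ ζ
  have hconst : ∀ᶠ t : ℝ in 𝓝 0, N.F (m + t • d) = N.F ξ := by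
    filter_upwards [Ioo_mem_nhds (show (-(1 / 2) : ℝ) < 0 by norm_num)
      (show (0 : ℝ) < 1 / 2 by norm_num)] with t ht
    refine N.F_eq_of_mem_segment hη hξ hζ h
      ⟨1 / 2 - t, 1 / 2 + t, by linarith [ht.2], by linarith [ht.1], by ring, ?_⟩
    simp only [m, d, midpoint_eq_smul_add, invOf_eq_inv]
    module
  have hm : m ≠ 0 := by
    intro hm
    have hFm := hconst.self_of_nhds
    rw [hm, zero_smul, add_zero, N.F_zero] at hFm
    exact hne ((N.F_eq_zero_iff.mp hFm.symm).trans (N.F_eq_zero_iff.mp (h ▸ hFm.symm)).symm)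
  have hsmooth : ContDiffAt ℝ 2 (fun x => N.F x ^ 2 / 2) m :=
    (((N.smooth.contDiffAt (isOpen_compl_singleton.mem_nhds hm)).of_le
      (WithTop.coe_le_coe.mpr le_top)).pow 2).div_const 2
  exact (N.elliptic m hm d (sub_ne_zero.mpr (Ne.symm hne))).ne'
    (fderiv_fderiv_apply_eq_zero_of_eventually_const hsmooth
      (hconst.mono fun t ht => by rw [ht]))

end Norm

section Flux

variable {n : ℕ} (N : MinkowskiNorm n) {p : ℝ} {ξ ζ : En n}

/-- The flux `F(ξ)^{p-1} F_ξ(ξ)` of the Finsler `p`-Laplacian. -/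
def flux (p : ℝ) (ξ : En n) : En n :=
  N.F ξ ^ (p - 1) • gradient N.F ξ

theorem flux_zero (hp : 1 < p) : N.flux p 0 = 0 := by
  rw [flux, N.F_zero, Real.zero_rpow (sub_pos.mpr hp).ne', zero_smul]

theorem inner_flux_self (p : ℝ) (ξ : En n) : ⟪N.flux p ξ, ξ⟫ = N.F ξ ^ (p - 1) * N.F ξ := by
  rw [flux, real_inner_smul_left, N.inner_gradient_F_self]

theorem inner_flux_le (hp : 1 < p) (ξ ζ : En n) :
    ⟪N.flux p ξ, ζ⟫ ≤ N.F ξ ^ (p - 1) * N.F ζ := by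
  rcases eq_or_ne ξ 0 with rfl | hξ
  · rw [N.flux_zero hp, inner_zero_left]
    exact mul_nonneg (Real.rpow_nonneg (N.F_nonneg _) _) (N.F_nonneg ζ)
  · rw [flux, real_inner_smul_left]
    exact mul_le_mul_of_nonneg_left (N.inner_gradient_F_le hξ ζ)
      (Real.rpow_nonneg (N.F_nonneg ξ) _)

theorem inner_flux_lt (h : N.F ξ = N.F ζ) (hne : ξ ≠ ζ) :
    ⟪N.flux p ξ, ζ⟫ < N.F ξ ^ (p - 1) * N.F ζ := by
  have hξ : ξ ≠ 0 := by
    rintro rfl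
    exact hne (N.F_eq_zero_iff.mp (h ▸ N.F_zero)).symm
  have hlt : ⟪gradient N.F ξ, ζ⟫ < N.F ζ := (N.inner_gradient_F_le hξ ζ).lt_of_ne fun heq =>
    hne (N.eq_of_inner_eq_F (N.inner_gradient_F_le hξ) (N.inner_gradient_F_self ξ) heq h)
  rw [flux, real_inner_smul_left]
  exact mul_lt_mul_of_pos_left hlt (Real.rpow_pos_of_pos (N.pos ξ hξ) _)

theorem inner_flux_sub_flux (p : ℝ) (ξ ζ : En n) :
    ⟪N.flux p ξ - N.flux p ζ, ξ - ζ⟫ = (N.F ξ ^ (p - 1) - N.F ζ ^ (p - 1)) * (N.F ξ - N.F ζ) +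
      (N.F ξ ^ (p - 1) * N.F ζ - ⟪N.flux p ξ, ζ⟫) +
      (N.F ζ ^ (p - 1) * N.F ξ - ⟪N.flux p ζ, ξ⟫) := by
  rw [inner_sub_left, inner_sub_right, inner_sub_right, N.inner_flux_self, N.inner_flux_self]
  ring

theorem isStrictlyMonotone_flux (hp : 1 < p) : IsStrictlyMonotone (N.flux p) := by
  intro ξ ζ hne
  have hp' : 0 < p - 1 := sub_pos.mpr hp
  have hξζ := N.inner_flux_le hp ξ ζ
  have hζξ := N.inner_flux_le hp ζ ξ
  rw [N.inner_flux_sub_flux]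
  rcases lt_trichotomy (N.F ξ) (N.F ζ) with h | h | h
  · have := mul_pos_of_neg_of_neg
      (sub_neg.mpr (Real.rpow_lt_rpow (N.F_nonneg ξ) h hp')) (sub_neg.mpr h)
    linarith
  · have := N.inner_flux_lt (p := p) h hne
    rw [sub_eq_zero.mpr h, mul_zero]
    linarith
  · have := mul_pos
      (sub_pos.mpr (Real.rpow_lt_rpow (N.F_nonneg ζ) h hp')) (sub_pos.mpr h)
    linarith

theorem norm_flux_le (hp : 1 < p) {C : ℝ} (hC : ∀ ζ, N.F ζ ≤ C * ‖ζ‖) (ξ : En n) :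
    ‖N.flux p ξ‖ ≤ N.F ξ ^ (p - 1) * C := by
  have hnonneg : 0 ≤ N.F ξ ^ (p - 1) := Real.rpow_nonneg (N.F_nonneg ξ) _
  rcases eq_or_ne ξ 0 with rfl | hξ
  · rw [N.flux_zero hp, N.F_zero, Real.zero_rpow (sub_pos.mpr hp).ne', norm_zero, zero_mul]
  rw [flux, norm_smul, Real.norm_of_nonneg hnonneg]
  refine mul_le_mul_of_nonneg_left ?_ hnonneg
  have hself := (N.inner_gradient_F_le hξ (gradient N.F ξ)).trans (hC _)
  rw [real_inner_self_eq_norm_mul_norm] at hself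
  refine le_of_mul_le_mul_right hself (norm_pos_iff.mpr fun h => (N.pos ξ hξ).ne' ?_)
  rw [← N.inner_gradient_F_self, h, inner_zero_left]

theorem continuous_flux (hp : 1 < p) : Continuous (N.flux p) := by
  have hp' : 0 < p - 1 := sub_pos.mpr hp
  have hpow : Continuous fun ξ => N.F ξ ^ (p - 1) :=
    N.continuous_F.rpow_const fun _ => Or.inr hp'.le
  refine continuous_iff_continuousAt.mpr fun ξ => ?_
  rcases eq_or_ne ξ 0 with rfl | hξ
  · obtain ⟨C, -, hC⟩ := N.exists_F_le_mul_norm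
    rw [ContinuousAt, N.flux_zero hp]
    refine squeeze_zero_norm (N.norm_flux_le hp hC) ?_
    simpa [N.F_zero, Real.zero_rpow hp'.ne'] using (hpow.mul_const C).tendsto 0
  · exact hpow.continuousAt.smul
      ((continuousOn_gradient isOpen_compl_singleton (N.smooth.of_le (by exact_mod_cast le_top))
        ).continuousAt (isOpen_compl_singleton.mem_nhds hξ))

end Flux

section Polar

variable {n : ℕ} [NeZero n] (N : MinkowskiNorm n) {p k : ℝ} {x : En n}

theorem exists_F_eq_one_and_inner_eq_polarF (x : En n) :
    ∃ ξ : En n, N.F ξ = 1 ∧ ⟪ξ, x⟫ = polarF N x ∧ ∀ ζ, ⟪ζ, x⟫ ≤ N.F ζ * polarF N x := by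
  obtain ⟨e, he⟩ := exists_ne (0 : En n)
  obtain ⟨ξ, hξ, hmax⟩ := N.isCompact_unitSphere.exists_isMaxOn ⟨_, N.F_inv_smul_self he⟩
    (f := fun ξ => ⟪ξ, x⟫) (by fun_prop)
  have hξ0 : ξ ≠ 0 := fun h => one_ne_zero (hξ.symm.trans (h ▸ N.F_zero))
  have hle : ∀ ζ, ζ ≠ 0 → ⟪ζ, x⟫ / N.F ζ ≤ ⟪ξ, x⟫ := fun ζ hζ => by
    have h : ⟪(N.F ζ)⁻¹ • ζ, x⟫ ≤ ⟪ξ, x⟫ := hmax (N.F_inv_smul_self hζ)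
    rwa [real_inner_smul_left, inv_mul_eq_div] at h
  have hgreatest : IsGreatest {c : ℝ | ∃ ξ : En n, ξ ≠ 0 ∧ c = ⟪ξ, x⟫ / N.F ξ} ⟪ξ, x⟫ :=
    ⟨⟨ξ, hξ0, by rw [show N.F ξ = 1 from hξ, div_one]⟩, by rintro _ ⟨ζ, hζ, rfl⟩; exact hle ζ hζ⟩
  have hpolar : polarF N x = ⟪ξ, x⟫ := hgreatest.csSup_eq
  refine ⟨ξ, hξ, hpolar.symm, fun ζ => ?_⟩
  rw [hpolar]
  rcases eq_or_ne ζ 0 with rfl | hζ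
  · rw [inner_zero_left, N.F_zero, zero_mul]
  · exact (div_le_iff₀' (N.pos ζ hζ)).mp (hle ζ hζ)

/-- A point of `{F = 1}` at which the supremum defining `F^o(x)` is attained. It is unique for
`x ≠ 0`, where it is the gradient of `F^o`. -/
def polarMaximizer (x : En n) : En n :=
  (N.exists_F_eq_one_and_inner_eq_polarF x).choose

theorem F_polarMaximizer (x : En n) : N.F (N.polarMaximizer x) = 1 :=
  (N.exists_F_eq_one_and_inner_eq_polarF x).choose_spec.1

theorem inner_polarMaximizer (x : En n) : ⟪N.polarMaximizer x, x⟫ = polarF N x :=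
  (N.exists_F_eq_one_and_inner_eq_polarF x).choose_spec.2.1

theorem inner_le_F_mul_polarF (ζ x : En n) : ⟪ζ, x⟫ ≤ N.F ζ * polarF N x :=
  (N.exists_F_eq_one_and_inner_eq_polarF x).choose_spec.2.2 ζ

theorem polarF_zero : polarF N 0 = 0 := by
  rw [← N.inner_polarMaximizer, inner_zero_right]

theorem polarF_pos (hx : x ≠ 0) : 0 < polarF N x :=
  (pos_iff_pos_of_mul_pos ((real_inner_self_pos.mpr hx).trans_le
    (N.inner_le_F_mul_polarF x x))).mp (N.pos x hx)

theorem exists_mul_norm_le_polarF : ∃ c > 0, ∀ x, c * ‖x‖ ≤ polarF N x := by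
  obtain ⟨C, hC, hupper⟩ := N.exists_F_le_mul_norm
  refine ⟨C⁻¹, inv_pos.mpr hC, fun x => ?_⟩
  rcases eq_or_ne x 0 with rfl | hx
  · rw [norm_zero, mul_zero, N.polarF_zero]
  rw [inv_mul_le_iff₀ hC]
  refine le_of_mul_le_mul_left ?_ (norm_pos_iff.mpr hx)
  calc ‖x‖ * ‖x‖ = ⟪x, x⟫ := (real_inner_self_eq_norm_mul_norm x).symm
    _ ≤ N.F x * polarF N x := N.inner_le_F_mul_polarF x x
    _ ≤ C * ‖x‖ * polarF N x := mul_le_mul_of_nonneg_right (hupper x) (N.polarF_pos hx).le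
    _ = ‖x‖ * (C * polarF N x) := by ring

theorem inner_polarMaximizer_sub_le (x y : En n) :
    ⟪N.polarMaximizer x, y - x⟫ ≤ polarF N y - polarF N x := by
  have h := N.inner_le_F_mul_polarF (N.polarMaximizer x) y
  rw [N.F_polarMaximizer, one_mul] at h
  rw [inner_sub_right, N.inner_polarMaximizer]
  exact sub_le_sub_right h _

theorem convexOn_polarF : ConvexOn ℝ univ (polarF N) := by
  refine ⟨convex_univ, fun x _ y _ a b ha hb _ => ?_⟩
  set D := N.polarMaximizer (a • x + b • y)
  have hD : ∀ z, ⟪D, z⟫ ≤ polarF N z := fun z => by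
    simpa [D, N.F_polarMaximizer] using N.inner_le_F_mul_polarF D z
  calc polarF N (a • x + b • y) = a * ⟪D, x⟫ + b * ⟪D, y⟫ := by
        rw [← N.inner_polarMaximizer, inner_add_right, real_inner_smul_right,
          real_inner_smul_right]
    _ ≤ a • polarF N x + b • polarF N y :=
        add_le_add (mul_le_mul_of_nonneg_left (hD x) ha) (mul_le_mul_of_nonneg_left (hD y) hb)

theorem continuous_polarF : Continuous (polarF N) := by
  simpa [continuousOn_univ] using N.convexOn_polarF.continuousOn_interior

theorem inner_inv_polarF_smul_le (hx : x ≠ 0) (ζ : En n) :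
    ⟪(polarF N x)⁻¹ • x, ζ⟫ ≤ N.F ζ := by
  rw [real_inner_smul_left, real_inner_comm, inv_mul_le_iff₀' (N.polarF_pos hx)]
  exact N.inner_le_F_mul_polarF ζ x

theorem eq_polarMaximizer (hx : x ≠ 0) {ζ : En n} (hF : N.F ζ = 1)
    (hinner : ⟪ζ, x⟫ = polarF N x) : ζ = N.polarMaximizer x := by
  have hcontact : ∀ ξ : En n, N.F ξ = 1 → ⟪ξ, x⟫ = polarF N x →
      ⟪(polarF N x)⁻¹ • x, ξ⟫ = N.F ξ := fun ξ hξ hξx => by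
    rw [real_inner_smul_left, real_inner_comm, hξx, hξ, inv_mul_cancel₀ (N.polarF_pos hx).ne']
  exact N.eq_of_inner_eq_F (N.inner_inv_polarF_smul_le hx) (hcontact ζ hF hinner)
    (hcontact _ (N.F_polarMaximizer x) (N.inner_polarMaximizer x))
    (hF.trans (N.F_polarMaximizer x).symm)

theorem continuousAt_polarMaximizer (hx : x ≠ 0) : ContinuousAt N.polarMaximizer x := by
  refine N.isCompact_unitSphere.tendsto_nhds_of_unique_mapClusterPt
    (Eventually.of_forall N.F_polarMaximizer) fun ζ hF hζ => N.eq_polarMaximizer hx hF ?_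
  obtain ⟨U, hU, hζU⟩ := mapClusterPt_iff_ultrafilter.mp hζ
  have hinner : Tendsto (fun y => ⟪N.polarMaximizer y, y⟫) U (𝓝 ⟪ζ, x⟫) :=
    hζU.inner (tendsto_id.mono_left hU)
  simp only [N.inner_polarMaximizer] at hinner
  exact tendsto_nhds_unique hinner ((N.continuous_polarF.tendsto x).mono_left hU)

theorem hasGradientAt_polarF (hx : x ≠ 0) :
    HasGradientAt (polarF N) (N.polarMaximizer x) x :=
  hasGradientAt_of_subgradient N.inner_polarMaximizer_sub_le (N.continuousAt_polarMaximizer hx)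

theorem gradient_F_neg_smul_polarMaximizer (hx : x ≠ 0) (hk : 0 < k) :
    gradient N.F (-(k • N.polarMaximizer x)) = -((polarF N x)⁻¹ • x) := by
  have hF : N.F (-(k • N.polarMaximizer x)) = k := by
    rw [N.even, N.homog k hk.le, N.F_polarMaximizer, mul_one]
  refine N.gradient_F_eq_of_inner_le (fun ζ => ?_) (fun h => hk.ne ?_) ?_
  · rw [inner_neg_left, ← inner_neg_right, ← N.even ζ]
    exact N.inner_inv_polarF_smul_le hx (-ζ)
  · rw [← hF, h, N.F_zero]
  · rw [inner_neg_neg, hF, real_inner_smul_left, real_inner_smul_right, real_inner_comm,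
      N.inner_polarMaximizer, mul_left_comm, inv_mul_cancel₀ (N.polarF_pos hx).ne', mul_one]

theorem flux_neg_smul_polarMaximizer (p : ℝ) (hx : x ≠ 0) (hk : 0 < k) :
    N.flux p (-(k • N.polarMaximizer x)) = -((k ^ (p - 1) * (polarF N x)⁻¹) • x) := by
  rw [flux, N.gradient_F_neg_smul_polarMaximizer hx hk, N.even, N.homog k hk.le,
    N.F_polarMaximizer, mul_one, smul_neg, smul_smul]

end Polar

end MinkowskiNorm

namespace MinkowskiNorm

section Barrier

variable {n : ℕ} (N : MinkowskiNorm n) {p s α : ℝ} {x y : En n}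

/-- The radial function `(s / F^o(x - y))^α`. For `α = (n - p) / (p - 1)` it is the `p`-capacitary
potential of the Wulff shape of radius `s` centered at `y`. For `α ≠ 0` its value at `y` is `0`,
since division by zero gives zero. -/
def barrier (s α : ℝ) (y x : En n) : ℝ :=
  (s / polarF N (x - y)) ^ α

theorem barrier_le_one (hs : 0 < s) (hα : 0 ≤ α) (h : s ≤ polarF N (x - y)) :
    N.barrier s α y x ≤ 1 :=
  Real.rpow_le_one (div_nonneg hs.le (hs.le.trans h)) ((div_le_one (hs.trans_le h)).mpr h) hα

variable [NeZero n]

theorem continuous_polarF_sub (y : En n) : Continuous fun x => polarF N (x - y) :=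
  N.continuous_polarF.comp (continuous_sub_right y)

theorem polarF_sub_pos (hx : x ≠ y) : 0 < polarF N (x - y) :=
  N.polarF_pos (sub_ne_zero.mpr hx)

theorem hasGradientAt_polarF_sub (hx : x ≠ y) :
    HasGradientAt (fun z => polarF N (z - y)) (N.polarMaximizer (x - y)) x :=
  hasGradientAt_iff_hasFDerivAt.mpr ((hasFDerivAt_comp_sub y).mpr
    (N.hasGradientAt_polarF (sub_ne_zero.mpr hx)).hasFDerivAt)

theorem continuousOn_polarMaximizer_sub (y : En n) :
    ContinuousOn (fun x => N.polarMaximizer (x - y)) {y}ᶜ := fun _ hx =>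
  (ContinuousAt.comp (f := fun x => x - y) (N.continuousAt_polarMaximizer (sub_ne_zero.mpr hx))
    (continuous_sub_right y).continuousAt).continuousWithinAt

theorem tendsto_polarF_sub_cocompact_atTop (y : En n) :
    Tendsto (fun x => polarF N (x - y)) (cocompact (En n)) atTop := by
  obtain ⟨c, hc, hlower⟩ := N.exists_mul_norm_le_polarF
  have hsub : Tendsto (fun x => x - y) (cocompact (En n)) (cocompact (En n)) :=
    (Homeomorph.subRight y).isClosedEmbedding.tendsto_cocompact
  exact tendsto_atTop_mono (fun x => hlower (x - y))
    ((tendsto_norm_cocompact_atTop.comp hsub).const_mul_atTop hc)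

theorem fderiv_inv_polarF_sub_pow_apply (hx : x ≠ y) :
    fderiv ℝ (fun z => (polarF N (z - y) ^ n)⁻¹) x (x - y) = -(n * (polarF N (x - y) ^ n)⁻¹) := by
  have hP := N.polarF_sub_pos hx
  have hpow := (hasDerivAt_pow n (polarF N (x - y))).fun_inv (pow_pos hP n).ne'
  have hfd := HasDerivAt.comp_hasFDerivAt (h₂ := fun t : ℝ => (t ^ n)⁻¹) x hpow
    (N.hasGradientAt_polarF_sub hx).hasFDerivAt
  rw [show (fun z => (polarF N (z - y) ^ n)⁻¹) = (fun t : ℝ => (t ^ n)⁻¹) ∘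
    fun z => polarF N (z - y) from rfl, hfd.fderiv, smul_apply,
    InnerProductSpace.toDual_apply_apply, N.inner_polarMaximizer, smul_eq_mul]
  have hsucc : polarF N (x - y) ^ n = polarF N (x - y) ^ (n - 1) * polarF N (x - y) :=
    (pow_sub_one_mul (NeZero.ne n) _).symm
  rw [hsucc]
  field_simp

theorem isWeaklyDivFree_inv_polarF_sub_pow_smul (y : En n) :
    IsWeaklyDivFree volume (fun x => (polarF N (x - y) ^ n)⁻¹ • (x - y)) {y}ᶜ := by
  have hP : ContDiffOn ℝ 1 (fun x => (polarF N (x - y) ^ n)⁻¹) {y}ᶜ :=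
    ((contDiffOn_one_of_hasGradientAt isOpen_compl_singleton
      (fun x hx => N.hasGradientAt_polarF_sub hx) (N.continuousOn_polarMaximizer_sub y)).pow n).inv
      fun x hx => (pow_pos (N.polarF_sub_pos hx) n).ne'
  refine isWeaklyDivFree_of_divg_eq_zero isOpen_compl_singleton
    (hP.smul (contDiffOn_id.sub contDiffOn_const)) fun x hx => ?_
  rw [divg_smul_sub ((hP.contDiffAt (isOpen_compl_singleton.mem_nhds hx)).differentiableAt
    one_ne_zero), N.fderiv_inv_polarF_sub_pow_apply hx, add_neg_cancel]

theorem one_le_barrier (hα : 0 ≤ α) (hx : x ≠ y) (h : polarF N (x - y) ≤ s) :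
    1 ≤ N.barrier s α y x :=
  Real.one_le_rpow ((one_le_div (N.polarF_sub_pos hx)).mpr h) hα

theorem hasGradientAt_barrier (hs : 0 < s) (hx : x ≠ y) :
    HasGradientAt (N.barrier s α y)
      (-((α * s ^ α * polarF N (x - y) ^ (-α - 1)) • N.polarMaximizer (x - y))) x := by
  have hP := N.polarF_sub_pos hx
  have hpow : HasDerivAt (fun t : ℝ => (s / t) ^ α)
      (-(α * s ^ α * polarF N (x - y) ^ (-α - 1))) (polarF N (x - y)) := by
    refine (((Real.hasDerivAt_rpow_const (p := -α) (Or.inl hP.ne')).const_mul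
      (s ^ α)).congr_of_eventuallyEq ?_).congr_deriv (by ring)
    filter_upwards [Ioi_mem_nhds hP] with t ht
    rw [Real.div_rpow hs.le (le_of_lt ht), Real.rpow_neg (le_of_lt ht), div_eq_mul_inv]
  have hfd := HasDerivAt.comp_hasFDerivAt (h₂ := fun t : ℝ => (s / t) ^ α) x hpow
    (N.hasGradientAt_polarF_sub hx).hasFDerivAt
  rw [hasGradientAt_iff_hasFDerivAt, ← neg_smul, map_smul]
  exact hfd

theorem contDiffOn_barrier (hs : 0 < s) (α : ℝ) (y : En n) :
    ContDiffOn ℝ 1 (N.barrier s α y) {y}ᶜ := by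
  refine contDiffOn_one_of_hasGradientAt isOpen_compl_singleton
    (fun x hx => N.hasGradientAt_barrier hs hx) ?_
  exact ((continuousOn_const.mul ((N.continuous_polarF_sub y).continuousOn.rpow_const
    fun x hx => Or.inl (N.polarF_sub_pos hx).ne')).smul (N.continuousOn_polarMaximizer_sub y)).neg

theorem tendsto_barrier_cocompact (s : ℝ) (hα : 0 < α) (y : En n) :
    Tendsto (N.barrier s α y) (cocompact (En n)) (𝓝 0) := by
  have h := ((N.tendsto_polarF_sub_cocompact_atTop y).const_div_atTop s).rpow_const (Or.inr hα.le)
  rw [Real.zero_rpow hα.ne'] at h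
  exact h

theorem tendsto_barrier_atTop (hs : 0 < s) (hα : 0 < α) (y : En n) :
    Tendsto (N.barrier s α y) (𝓝[≠] y) atTop := by
  have hP : Tendsto (fun x => polarF N (x - y)) (𝓝[≠] y) (𝓝[>] 0) :=
    tendsto_nhdsWithin_iff.mpr
      ⟨((N.continuous_polarF_sub y).tendsto' y 0 (by rw [sub_self, N.polarF_zero])).mono_left
        nhdsWithin_le_nhds, eventually_mem_nhdsWithin.mono fun x hx => N.polarF_sub_pos hx⟩
  exact (tendsto_rpow_atTop hα).comp ((tendsto_inv_nhdsGT_zero.comp hP).const_mul_atTop hs)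

theorem flux_gradient_barrier (hp1 : 1 < p) (hpn : p < n) (hs : 0 < s) (hx : x ≠ y) :
    N.flux p (gradient (N.barrier s ((n - p) / (p - 1)) y) x) =
      (-((n - p) / (p - 1) * s ^ ((n - p) / (p - 1))) ^ (p - 1)) •
        (polarF N (x - y) ^ n)⁻¹ • (x - y) := by
  have hα : 0 < (n - p) / (p - 1) := div_pos (sub_pos.mpr hpn) (sub_pos.mpr hp1)
  set α := (n - p) / (p - 1) with hα_def
  have hP := N.polarF_sub_pos hx
  have hκ : 0 < α * s ^ α := mul_pos hα (Real.rpow_pos_of_pos hs _)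
  have hexp : (-α - 1) * (p - 1) + -1 = -(n : ℝ) := by
    rw [hα_def]
    field_simp [(sub_pos.mpr hp1).ne']
    ring
  have hpow : (polarF N (x - y) ^ (-α - 1)) ^ (p - 1) * (polarF N (x - y))⁻¹ =
      (polarF N (x - y) ^ n)⁻¹ := by
    rw [← Real.rpow_mul hP.le, ← Real.rpow_neg_one, ← Real.rpow_add hP, hexp,
      Real.rpow_neg hP.le, Real.rpow_natCast]
  rw [(N.hasGradientAt_barrier hs hx).gradient, N.flux_neg_smul_polarMaximizer p
    (sub_ne_zero.mpr hx) (mul_pos hκ (Real.rpow_pos_of_pos hP _)),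
    Real.mul_rpow hκ.le (Real.rpow_nonneg hP.le _), mul_assoc, hpow, neg_smul, smul_smul]

theorem isWeaklyDivFree_flux_gradient_barrier (hp1 : 1 < p) (hpn : p < n) (hs : 0 < s)
    (y : En n) : IsWeaklyDivFree volume
      (fun x => N.flux p (gradient (N.barrier s ((n - p) / (p - 1)) y) x)) {y}ᶜ :=
  ((N.isWeaklyDivFree_inv_polarF_sub_pow_smul y).const_smul _).congr
    fun _ hx => N.flux_gradient_barrier hp1 hpn hs hx

end Barrier

section Potential

variable {n : ℕ} {N : MinkowskiNorm n} {Ω U : Set (En n)} {p r s : ℝ} {v : En n → ℝ}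
  {x₀ y₀ : En n}

theorem isWeaklyDivFree_flux_gradient (hp : 1 < p) (hU : IsOpen U) (hUΩ : U ⊆ Ω)
    (hv : ContDiffOn ℝ 1 v U) (hsol : IsWeakPHarmonic N Ω p v) :
    IsWeaklyDivFree volume (fun x => N.flux p (gradient v x)) U := by
  refine isWeaklyDivFree_of_smooth hU
    ((N.continuous_flux hp).comp_continuousOn (continuousOn_gradient hU hv))
    fun ψ hψ hc hψU => ?_
  have h := hsol ψ ⟨hψ, hc, hψU.trans hUΩ⟩
  rw [setIntegral_eq_integral_of_forall_compl_eq_zero fun x hx => ?_] at h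
  · simpa only [flux, real_inner_smul_left] using h
  · rw [Function.notMem_support.mp fun h => hx (hUΩ (hψU (support_gradient_subset_tsupport h))),
      inner_zero_right, mul_zero]

variable [NeZero n]

theorem le_polarF_sub_of_mem_closure (hin : Wulff N r x₀ ⊆ Ωᶜ) {x : En n} (hx : x ∈ closure Ω) :
    r ≤ polarF N (x - x₀) :=
  closure_minimal (fun _ hz => not_lt.mp fun h => hin h hz)
    (isClosed_le continuous_const (N.continuous_polarF_sub x₀)) hx

theorem barrier_le_of_wulff_subset_compl (hΩ : IsOpen Ω) (hp1 : 1 < p) (hpn : p < n)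
    (hv : ContDiffOn ℝ 1 v Ω) (hvc : ContinuousOn v (closure Ω)) (hsol : IsWeakPHarmonic N Ω p v)
    (hbc : ∀ x ∈ frontier Ω, 1 ≤ v x) (hlim : Tendsto v (cocompact (En n) ⊓ 𝓟 Ω) (𝓝 0))
    (hr : 0 < r) (hin : Wulff N r x₀ ⊆ Ωᶜ) :
    ∀ x ∈ Ω, N.barrier r ((n - p) / (p - 1)) x₀ x ≤ v x := by
  have hα : 0 < (n - p) / (p - 1) := div_pos (sub_pos.mpr hpn) (sub_pos.mpr hp1)
  have hx₀ : closure Ω ⊆ {x₀}ᶜ := by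
    rintro _ hx rfl
    have h := le_polarF_sub_of_mem_closure hin hx
    rw [sub_self, N.polarF_zero] at h
    exact hr.not_ge h
  have hbarrier := N.contDiffOn_barrier hr ((n - p) / (p - 1)) x₀
  refine le_of_isWeaklyDivFree (N.continuous_flux hp1) (N.isStrictlyMonotone_flux hp1) hΩ
    (hbarrier.mono (subset_closure.trans hx₀)) hv
    ((N.isWeaklyDivFree_flux_gradient_barrier hp1 hpn hr x₀).mono (subset_closure.trans hx₀))
    (isWeaklyDivFree_flux_gradient hp1 hΩ subset_rfl hv hsol) (fun ε hε z hz => ?_)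
    fun ε hε => ?_
  · have hzΩ : z ∈ closure Ω := frontier_subset_closure hz
    have hle : N.barrier r ((n - p) / (p - 1)) x₀ z - v z ≤ 0 := sub_nonpos.mpr
      ((N.barrier_le_one hr hα.le (le_polarF_sub_of_mem_closure hin hzΩ)).trans (hbc z hz))
    exact ((((hbarrier.continuousOn.mono hx₀).sub hvc) z hzΩ).mono subset_closure).eventually
      (gt_mem_nhds (hle.trans_lt hε))
  · have h := ((N.tendsto_barrier_cocompact r hα x₀).mono_left inf_le_left).sub hlim
    rw [sub_zero] at h
    exact h.eventually (gt_mem_nhds hε)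

theorem le_barrier_of_compl_subset_wulff (hΩ : IsOpen Ω) (hp1 : 1 < p) (hpn : p < n)
    (hv : ContDiffOn ℝ 1 v Ω) (hvc : ContinuousOn v (closure Ω)) (hsol : IsWeakPHarmonic N Ω p v)
    (hbc : ∀ x ∈ frontier Ω, v x ≤ 1) (hlim : Tendsto v (cocompact (En n) ⊓ 𝓟 Ω) (𝓝 0))
    (hs : 0 < s) (hout : Ωᶜ ⊆ Wulff N s y₀) :
    ∀ x ∈ Ω \ {y₀}, v x ≤ N.barrier s ((n - p) / (p - 1)) y₀ x := by
  have hα : 0 < (n - p) / (p - 1) := div_pos (sub_pos.mpr hpn) (sub_pos.mpr hp1)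
  have hU : IsOpen (Ω \ {y₀}) := hΩ.sdiff isClosed_singleton
  have hUΩ : Ω \ {y₀} ⊆ Ω := sdiff_subset
  have hUy₀ : Ω \ {y₀} ⊆ {y₀}ᶜ := fun x hx => hx.2
  have hbarrier := N.contDiffOn_barrier hs ((n - p) / (p - 1)) y₀
  refine le_of_isWeaklyDivFree (N.continuous_flux hp1) (N.isStrictlyMonotone_flux hp1) hU
    (hv.mono hUΩ) (hbarrier.mono hUy₀)
    (isWeaklyDivFree_flux_gradient hp1 hU hUΩ (hv.mono hUΩ) hsol)
    ((N.isWeaklyDivFree_flux_gradient_barrier hp1 hpn hs y₀).mono hUy₀) (fun ε hε z hz => ?_)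
    fun ε hε => ?_
  · have hzΩ : z ∈ closure Ω := closure_mono hUΩ (frontier_subset_closure hz)
    have hvz : Tendsto v (𝓝[Ω \ {y₀}] z) (𝓝 (v z)) :=
      (hvc z hzΩ).mono (hUΩ.trans subset_closure)
    rcases eq_or_ne z y₀ with rfl | hzy
    · have htop := (N.tendsto_barrier_atTop hs hα z).mono_left (nhdsWithin_mono z hUy₀)
      exact (hvz.add_atBot (tendsto_neg_atTop_atBot.comp htop)).eventually_lt_atBot ε
    · have hzΩ' : z ∉ Ω := fun h => (hU.frontier_eq ▸ hz).2 ⟨h, hzy⟩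
      have hle : v z - N.barrier s ((n - p) / (p - 1)) y₀ z ≤ 0 := sub_nonpos.mpr
        ((hbc z (hΩ.frontier_eq ▸ ⟨hzΩ, hzΩ'⟩)).trans
          (N.one_le_barrier hα.le hzy (hout hzΩ').le))
      exact (hvz.sub ((hbarrier.continuousOn z hzy).mono hUy₀)).eventually
        (gt_mem_nhds (hle.trans_lt hε))
  · have h := (hlim.mono_left (inf_le_inf_left _ (principal_mono.mpr hUΩ))).sub
      ((N.tendsto_barrier_cocompact s hα y₀).mono_left inf_le_left)
    rw [sub_zero] at h
    exact h.eventually (gt_mem_nhds hε)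

end Potential

end MinkowskiNorm

theorem statement6_general {n : ℕ} {N : MinkowskiNorm n} {Ω : Set (En n)} (hΩ : IsOpen Ω) {p : ℝ}
    (hp1 : 1 < p) (hpn : p < n) {v : En n → ℝ} (hv : ContDiffOn ℝ 1 v Ω)
    (hvc : ContinuousOn v (closure Ω)) (hsol : IsWeakPHarmonic N Ω p v)
    (hbc : ∀ x ∈ frontier Ω, v x = 1) (hlim : Tendsto v (cocompact (En n) ⊓ 𝓟 Ω) (𝓝 0))
    {r s : ℝ} (hr : 0 < r) (hs : 0 < s) {x₀ y₀ : En n} (hin : Wulff N r x₀ ⊆ Ωᶜ)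
    (hout : Ωᶜ ⊆ Wulff N s y₀) :
    (∀ x ∈ Ω, (r / polarF N (x - x₀)) ^ ((n - p) / (p - 1)) ≤ v x) ∧
      ∀ x ∈ Ω, x ≠ y₀ → v x ≤ (s / polarF N (x - y₀)) ^ ((n - p) / (p - 1)) := by
  have : NeZero n := ⟨by rintro rfl; norm_num at hpn; linarith⟩
  exact ⟨MinkowskiNorm.barrier_le_of_wulff_subset_compl hΩ hp1 hpn hv hvc hsol
      (fun x hx => (hbc x hx).ge) hlim hr hin,
    fun x hx hxy => MinkowskiNorm.le_barrier_of_compl_subset_wulff hΩ hp1 hpn hv hvc hsol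
      (fun x hx => (hbc x hx).le) hlim hs hout x ⟨hx, hxy⟩⟩

/-- Barrier estimates for the anisotropic `p`-capacitary potential `v_p`:
if `W_r(x₀) ⊆ Ωᶜ ⊆ W_s(y₀)` then
`(r/F^o(x-x₀))^{(n-p)/(p-1)} ≤ v_p(x) ≤ (s/F^o(x-y₀))^{(n-p)/(p-1)}` on `Ω ∖ {y₀}`. -/
theorem statement6 (n : ℕ) (N : MinkowskiNorm n)
    (Ω : Set (En n)) (hΩ : IsOpen Ω) (hsb : HasSmoothBoundary Ω)
    (hbd : Bornology.IsBounded Ωᶜ)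
    (p : ℝ) (hp1 : 1 < p) (hpn : p < n)
    (v : En n → ℝ) (hpos : ∀ x ∈ closure Ω, 0 < v x)
    (hC1 : ContDiffOn ℝ 1 v (closure Ω))
    (hsol : IsWeakPHarmonic N Ω p v)
    (hbc : ∀ x ∈ frontier Ω, v x = 1)
    (hlim : Tendsto v (cocompact (En n)) (𝓝 0))
    (r s : ℝ) (hr : 0 < r) (hs : 0 < s) (x₀ y₀ : En n)
    (hin : Wulff N r x₀ ⊆ Ωᶜ) (hout : Ωᶜ ⊆ Wulff N s y₀) :
    ∀ x ∈ Ω, x ≠ y₀ →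
      (r / polarF N (x - x₀)) ^ ((n - p) / (p - 1)) ≤ v x ∧
      v x ≤ (s / polarF N (x - y₀)) ^ ((n - p) / (p - 1)) := by
  have h := statement6_general hΩ hp1 hpn (hC1.mono subset_closure) hC1.continuousOn hsol hbc
    (hlim.mono_left inf_le_left) hr hs hin hout
  exact fun x hx hxy => ⟨h.1 x hx, h.2 x hx hxy⟩
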